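/- arXiv:1605.06010 — 2 statements merged into one kernel-verified Lean document; each statement's English description precedes it below -/
import Mathlib

section
/- Let (X, T) be a dynamical system and ℱ a full Furstenberg family of subsets of ℤ⁺. The following statements are equivalent: (1) (X, T) is ℱ-mixing; (2) (K(X), T_K) is ℱ-transitive; (3) (K(X), T_K) is ℱ-mixing; (4) for every λ ∈ (0,1], (𝔽^{=λ}(X), T_F|_{𝔽^{=λ}(X)}) is ℱ-transitive; (5) for every λ ∈ (0,1], (𝔽^{=λ}(X), T_F|_{𝔽^{=λ}(X)}) is ℱ-mixing; (6) there exists λ ∈ (0,1] such that (𝔽^{=λ}(X), T_F|_{𝔽^{=λ}(X)}) is ℱ-transitive; (7) there exists λ ∈ (0,1] such that (𝔽^{=λ}(X), T_F|_{𝔽^{=λ}(X)}) is ℱ-mixing. -/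
open Metric Set TopologicalSpace Filter Function
open scoped Classical

variable {X Y : Type*}

/-- Extended Hausdorff metric on subsets of `X`: the usual Hausdorff distance between
two nonempty sets (or two empty sets), and `diam X` when exactly one of them is empty. -/
noncomputable def eHd (X : Type*) [MetricSpace X] (A B : Set X) : ℝ :=
  if (A.Nonempty ∧ B.Nonempty) ∨ (A = ∅ ∧ B = ∅) then Metric.hausdorffDist A B
  else Metric.diam (Set.univ : Set X)

/-- The `α`-cut of a fuzzy set. -/
def cut (A : X → ℝ) (α : ℝ) : Set X := {x | α ≤ A x}

/-- The levelwise metric `d_∞` on fuzzy sets. -/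
noncomputable def dinf [MetricSpace X] (A B : X → ℝ) : ℝ :=
  sSup {r : ℝ | ∃ α ∈ Set.Ioc (0:ℝ) 1, r = eHd X (cut A α) (cut B α)}

/-- A fuzzy set: an upper semicontinuous function into `[0,1]`. -/
def IsFuzzy [TopologicalSpace X] (A : X → ℝ) : Prop :=
  (∀ x, A x ∈ Set.Icc (0:ℝ) 1) ∧ UpperSemicontinuous A

/-- `𝔽₀(X)`: nonempty (not identically zero) u.s.c. fuzzy sets. -/
def F0 (X : Type*) [TopologicalSpace X] : Set (X → ℝ) :=
  {A | IsFuzzy A ∧ ∃ x, A x ≠ 0}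

/-- `𝔽^{=λ}(X)`: u.s.c. fuzzy sets with maximum value `λ`. -/
def Feq (X : Type*) [TopologicalSpace X] (lam : ℝ) : Set (X → ℝ) :=
  {A | IsFuzzy A ∧ (∃ x, A x = lam) ∧ ∀ x, A x ≤ lam}

/-- `𝔽^{≥λ}(X)`: u.s.c. fuzzy sets attaining a value `≥ λ`. -/
def Fge (X : Type*) [TopologicalSpace X] (lam : ℝ) : Set (X → ℝ) :=
  {A | IsFuzzy A ∧ ∃ x, lam ≤ A x}

/-- Zadeh's extension of `T`. -/
noncomputable def zadeh (T : X → X) (A : X → ℝ) : X → ℝ :=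
  fun x => sSup (A '' (T ⁻¹' {x}))

/-- The induced map `T_K` on the hyperspace of nonempty closed (= compact) subsets. -/
def hyper [TopologicalSpace X] (T : X → X) (hT : Continuous T)
    (A : NonemptyCompacts X) : NonemptyCompacts X :=
  ⟨⟨T '' A, A.isCompact.image hT⟩, A.nonempty.image T⟩

/-- Topological transitivity. -/
def TopTrans [TopologicalSpace Y] (S : Y → Y) : Prop :=
  ∀ U V : Set Y, IsOpen U → IsOpen V → U.Nonempty → V.Nonempty →
    ∃ n : ℕ, (S^[n] '' U ∩ V).Nonempty

/-- Weak mixing: `S × S` is transitive. -/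
def TopWeakMix [TopologicalSpace Y] (S : Y → Y) : Prop :=
  TopTrans (fun p : Y × Y => (S p.1, S p.2))

/-- Topological transitivity of `S` restricted to `C`, for the topology induced by the
(pseudo)metric `ρ`, phrased via metric balls. -/
def TransOn (ρ : Y → Y → ℝ) (S : Y → Y) (C : Set Y) : Prop :=
  ∀ A ∈ C, ∀ B ∈ C, ∀ ε > 0, ∃ n : ℕ, ∃ E ∈ C, ρ E A < ε ∧ ρ (S^[n] E) B < ε

/-- Weak mixing of `S` restricted to `C`, phrased via metric balls. -/
def WeakMixOn (ρ : Y → Y → ℝ) (S : Y → Y) (C : Set Y) : Prop :=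
  ∀ A₁ ∈ C, ∀ A₂ ∈ C, ∀ B₁ ∈ C, ∀ B₂ ∈ C, ∀ ε > 0, ∃ n : ℕ,
    ∃ E₁ ∈ C, ∃ E₂ ∈ C, ρ E₁ A₁ < ε ∧ ρ E₂ A₂ < ε ∧
      ρ (S^[n] E₁) B₁ < ε ∧ ρ (S^[n] E₂) B₂ < ε


/-- A Furstenberg family: an upward-hereditary collection of subsets of `ℤ⁺ = ℕ`. -/
def IsFamily (F : Set (Set ℕ)) : Prop :=
  ∀ A B : Set ℕ, A ⊆ B → A ∈ F → B ∈ F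

/-- The dual family `κℱ`. -/
def dualFam (F : Set (Set ℕ)) : Set (Set ℕ) :=
  {A | ∀ B ∈ F, (A ∩ B).Nonempty}

/-- A full family: every member of `ℱ·κℱ` is infinite. -/
def FullFam (F : Set (Set ℕ)) : Prop :=
  IsFamily F ∧ ∀ A ∈ F, ∀ B ∈ dualFam F, (A ∩ B).Infinite

/-- `ℱ`-transitivity on a topological space: `N(U,V) ∈ ℱ` for all nonempty open `U, V`. -/
def FTransTop [TopologicalSpace Y] (F : Set (Set ℕ)) (S : Y → Y) : Prop :=
  ∀ U V : Set Y, IsOpen U → IsOpen V → U.Nonempty → V.Nonempty →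
    {n : ℕ | (S^[n] '' U ∩ V).Nonempty} ∈ F

/-- `ℱ`-mixing on a topological space: `S × S` is `ℱ`-transitive. -/
def FMixTop [TopologicalSpace Y] (F : Set (Set ℕ)) (S : Y → Y) : Prop :=
  FTransTop F (fun p : Y × Y => (S p.1, S p.2))

/-- `ℱ`-transitivity of `S` restricted to `C`, phrased via metric balls. -/
def FTransOn (F : Set (Set ℕ)) (ρ : Y → Y → ℝ) (S : Y → Y) (C : Set Y) : Prop :=
  ∀ A ∈ C, ∀ B ∈ C, ∀ ε > 0,
    {n : ℕ | ∃ E ∈ C, ρ E A < ε ∧ ρ (S^[n] E) B < ε} ∈ F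

/-- `ℱ`-mixing of `S` restricted to `C`, phrased via metric balls. -/
def FMixOn (F : Set (Set ℕ)) (ρ : Y → Y → ℝ) (S : Y → Y) (C : Set Y) : Prop :=
  ∀ A₁ ∈ C, ∀ A₂ ∈ C, ∀ B₁ ∈ C, ∀ B₂ ∈ C, ∀ ε > 0,
    {n : ℕ | ∃ E₁ ∈ C, ∃ E₂ ∈ C, ρ E₁ A₁ < ε ∧ ρ E₂ A₂ < ε ∧
      ρ (S^[n] E₁) B₁ < ε ∧ ρ (S^[n] E₂) B₂ < ε} ∈ F

/-! Mixing of order two for an upward closed family gives mixing of every finite order, so for every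
`δ > 0` the times `n` at which the graph of `T^[n]` is `δ`-dense in `X × X` belong to the family. At
such a time any two nonempty closed sets `A`, `B` are joined by the closed set of points `δ`-close
to `A` with image `δ`-close to `B`; applying this to all cuts at once joins fuzzy sets of equal
height. Conversely, joining `{x}` to `{y₁, y₂}` in the hyperspace gives
`N(U, V₁) ∩ N(U, V₂) ∈ ℱ` for all nonempty open `U`, `V₁`, `V₂`, which already forces mixing. -/

section HitTimes

/-- The hitting-time set `N(U, V)`, in the form in which it occurs in `FTransTop`. -/
def hitTimes (S : Y → Y) (U V : Set Y) : Set ℕ :=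
  {n | (S^[n] '' U ∩ V).Nonempty}

variable {S : Y → Y} {U U' V V' : Set Y}

lemma mem_hitTimes {n : ℕ} : n ∈ hitTimes S U V ↔ ∃ x ∈ U, S^[n] x ∈ V :=
  image_inter_nonempty_iff

lemma hitTimes_mono (hU : U ⊆ U') (hV : V ⊆ V') : hitTimes S U V ⊆ hitTimes S U' V' :=
  fun _ hn => hn.mono (inter_subset_inter (image_mono hU) hV)

lemma hitTimes_preimage_iterate_subset (m : ℕ) :
    hitTimes S (S^[m] ⁻¹' U) (S^[m] ⁻¹' V) ⊆ hitTimes S U V := by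
  intro n hn
  obtain ⟨x, hxU, hxV⟩ := mem_hitTimes.1 hn
  refine mem_hitTimes.2 ⟨S^[m] x, hxU, ?_⟩
  rwa [← (Commute.iterate_iterate_self S m n).eq]

lemma hitTimes_prodMap {Z : Type*} {R : Z → Z} (U₁ V₁ : Set Y) (U₂ V₂ : Set Z) :
    hitTimes (Prod.map S R) (U₁ ×ˢ U₂) (V₁ ×ˢ V₂) = hitTimes S U₁ V₁ ∩ hitTimes R U₂ V₂ := by
  ext n
  simp only [hitTimes, mem_inter_iff, mem_ofPred_eq, Prod.map_iterate, prodMap_image_prod,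
    prod_inter_prod, prod_nonempty_iff]

end HitTimes

section TopologicalMixing

variable [TopologicalSpace Y] {S : Y → Y} {F : Set (Set ℕ)}

lemma FMixTop.hitTimes_inter_mem (h : FMixTop F S) {U₁ U₂ V₁ V₂ : Set Y}
    (hU₁ : IsOpen U₁) (hU₂ : IsOpen U₂) (hV₁ : IsOpen V₁) (hV₂ : IsOpen V₂)
    (neU₁ : U₁.Nonempty) (neU₂ : U₂.Nonempty) (neV₁ : V₁.Nonempty) (neV₂ : V₂.Nonempty) :
    hitTimes S U₁ V₁ ∩ hitTimes S U₂ V₂ ∈ F := by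
  rw [← hitTimes_prodMap]
  exact h _ _ (hU₁.prod hU₂) (hV₁.prod hV₂) (neU₁.prod neU₂) (neV₁.prod neV₂)

lemma fMixTop_of_hitTimes_inter_mem (hF : IsFamily F)
    (h : ∀ U₁ U₂ V₁ V₂ : Set Y, IsOpen U₁ → IsOpen U₂ → IsOpen V₁ → IsOpen V₂ →
      U₁.Nonempty → U₂.Nonempty → V₁.Nonempty → V₂.Nonempty →
      hitTimes S U₁ V₁ ∩ hitTimes S U₂ V₂ ∈ F) :
    FMixTop F S := by
  rintro U V hU hV ⟨⟨u₁, u₂⟩, hu⟩ ⟨⟨v₁, v₂⟩, hv⟩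
  obtain ⟨U₁, U₂, hU₁, hU₂, hu₁, hu₂, hUU⟩ := isOpen_prod_iff.1 hU u₁ u₂ hu
  obtain ⟨V₁, V₂, hV₁, hV₂, hv₁, hv₂, hVV⟩ := isOpen_prod_iff.1 hV v₁ v₂ hv
  refine hF _ _ (hitTimes_mono hUU hVV) ?_
  change hitTimes (Prod.map S S) _ _ ∈ F
  rw [hitTimes_prodMap]
  exact h U₁ U₂ V₁ V₂ hU₁ hU₂ hV₁ hV₂ ⟨u₁, hu₁⟩ ⟨u₂, hu₂⟩ ⟨v₁, hv₁⟩ ⟨v₂, hv₂⟩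

lemma FMixTop.fTransTop (h : FMixTop F S) : FTransTop F S := by
  intro U V hU hV neU neV
  have hUV := h.hitTimes_inter_mem hU hU hV hV neU neU neV neV
  rwa [inter_self] at hUV

lemma FMixTop.exists_hitTimes_subset (hF₀ : ∅ ∉ F) (hS : Continuous S) (h : FMixTop F S)
    {U₁ U₂ V₁ V₂ : Set Y} (hU₁ : IsOpen U₁) (hU₂ : IsOpen U₂) (hV₁ : IsOpen V₁) (hV₂ : IsOpen V₂)
    (neU₁ : U₁.Nonempty) (neU₂ : U₂.Nonempty) (neV₁ : V₁.Nonempty) (neV₂ : V₂.Nonempty) :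
    ∃ U V : Set Y, IsOpen U ∧ IsOpen V ∧ U.Nonempty ∧ V.Nonempty ∧
      hitTimes S U V ⊆ hitTimes S U₁ V₁ ∩ hitTimes S U₂ V₂ := by
  have hm : (hitTimes S U₁ U₂ ∩ hitTimes S V₁ V₂).Nonempty :=
    nonempty_iff_ne_empty.2 <| ne_of_mem_of_not_mem
      (h.hitTimes_inter_mem hU₁ hV₁ hU₂ hV₂ neU₁ neV₁ neU₂ neV₂) hF₀
  obtain ⟨m, hmU, hmV⟩ := hm
  exact ⟨U₁ ∩ S^[m] ⁻¹' U₂, V₁ ∩ S^[m] ⁻¹' V₂,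
    hU₁.inter (hU₂.preimage (hS.iterate m)), hV₁.inter (hV₂.preimage (hS.iterate m)),
    mem_hitTimes.1 hmU, mem_hitTimes.1 hmV,
    subset_inter (hitTimes_mono inter_subset_left inter_subset_left)
      ((hitTimes_mono inter_subset_right inter_subset_right).trans
        (hitTimes_preimage_iterate_subset m))⟩

lemma FMixTop.exists_hitTimes_subset_biInter [Nonempty Y] {ι : Type*} (hF₀ : ∅ ∉ F)
    (hS : Continuous S) (h : FMixTop F S) (s : Finset ι) {U V : ι → Set Y}
    (hU : ∀ i, IsOpen (U i)) (hV : ∀ i, IsOpen (V i))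
    (neU : ∀ i, (U i).Nonempty) (neV : ∀ i, (V i).Nonempty) :
    ∃ U' V' : Set Y, IsOpen U' ∧ IsOpen V' ∧ U'.Nonempty ∧ V'.Nonempty ∧
      hitTimes S U' V' ⊆ ⋂ i ∈ s, hitTimes S (U i) (V i) := by
  induction s using Finset.induction_on with
  | empty => exact ⟨univ, univ, isOpen_univ, isOpen_univ, univ_nonempty, univ_nonempty, by simp⟩
  | insert i s _ ih =>
    obtain ⟨U₁, V₁, hU₁, hV₁, neU₁, neV₁, hs⟩ := ih
    obtain ⟨U₂, V₂, hU₂, hV₂, neU₂, neV₂, hi⟩ := h.exists_hitTimes_subset hF₀ hS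
      (hU i) hU₁ (hV i) hV₁ (neU i) neU₁ (neV i) neV₁
    refine ⟨U₂, V₂, hU₂, hV₂, neU₂, neV₂, ?_⟩
    rw [Finset.set_biInter_insert]
    exact hi.trans (inter_subset_inter_right _ hs)

theorem FMixTop.biInter_hitTimes_mem [Nonempty Y] {ι : Type*} (hF : IsFamily F)
    (hS : Continuous S) (h : FMixTop F S) (s : Finset ι) {U V : ι → Set Y}
    (hU : ∀ i, IsOpen (U i)) (hV : ∀ i, IsOpen (V i))
    (neU : ∀ i, (U i).Nonempty) (neV : ∀ i, (V i).Nonempty) :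
    ⋂ i ∈ s, hitTimes S (U i) (V i) ∈ F := by
  by_cases hF₀ : ∅ ∈ F
  · exact hF _ _ (empty_subset _) hF₀
  obtain ⟨U', V', hU', hV', neU', neV', hsub⟩ :=
    h.exists_hitTimes_subset_biInter hF₀ hS s hU hV neU neV
  exact hF _ _ hsub (h.fTransTop U' V' hU' hV' neU' neV')

theorem fMixTop_of_common_source (hF : IsFamily F) (hS : Continuous S)
    (h : ∀ U V₁ V₂ : Set Y, IsOpen U → IsOpen V₁ → IsOpen V₂ →
      U.Nonempty → V₁.Nonempty → V₂.Nonempty → hitTimes S U V₁ ∩ hitTimes S U V₂ ∈ F) :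
    FMixTop F S := by
  refine fMixTop_of_hitTimes_inter_mem hF
    fun U₁ U₂ V₁ V₂ hU₁ hU₂ hV₁ hV₂ neU₁ neU₂ neV₁ neV₂ => ?_
  by_cases hF₀ : ∅ ∈ F
  · exact hF _ _ (empty_subset _) hF₀
  -- Such an `m` makes both `U₁ ∩ S⁻ᵐ U₂` and `S⁻ᵐ V₂` nonempty, and hitting `S⁻ᵐ V₂` from
  -- `S⁻ᵐ U₂` at time `n` means hitting `V₂` from `U₂` at time `n`.
  have hm : (hitTimes S U₁ U₂ ∩ hitTimes S U₁ V₂).Nonempty :=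
    nonempty_iff_ne_empty.2 <| ne_of_mem_of_not_mem
      (h U₁ U₂ V₂ hU₁ hU₂ hV₂ neU₁ neU₂ neV₂) hF₀
  obtain ⟨m, hmU, hmV⟩ := hm
  obtain ⟨x, -, hx⟩ := mem_hitTimes.1 hmV
  exact hF _ _ (inter_subset_inter (hitTimes_mono inter_subset_left subset_rfl)
    ((hitTimes_mono inter_subset_right subset_rfl).trans (hitTimes_preimage_iterate_subset m)))
    (h (U₁ ∩ S^[m] ⁻¹' U₂) V₁ (S^[m] ⁻¹' V₂) (hU₁.inter (hU₂.preimage (hS.iterate m))) hV₁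
      (hV₂.preimage (hS.iterate m)) (mem_hitTimes.1 hmU) neV₁ ⟨x, hx⟩)

end TopologicalMixing

section MetricMixing

variable [PseudoMetricSpace Y] {S : Y → Y} {F : Set (Set ℕ)}

lemma fMixTop_of_ball (hF : IsFamily F)
    (h : ∀ x₁ x₂ y₁ y₂ : Y, ∀ r > 0,
      hitTimes S (ball x₁ r) (ball y₁ r) ∩ hitTimes S (ball x₂ r) (ball y₂ r) ∈ F) :
    FMixTop F S := by
  rintro U V hU hV ⟨⟨x₁, x₂⟩, hx⟩ ⟨⟨y₁, y₂⟩, hy⟩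
  obtain ⟨a, ha, haU⟩ := Metric.isOpen_iff.1 hU _ hx
  obtain ⟨b, hb, hbV⟩ := Metric.isOpen_iff.1 hV _ hy
  refine hF _ _ (hitTimes_mono ((ball_subset_ball (min_le_left a b)).trans haU)
    ((ball_subset_ball (min_le_right a b)).trans hbV)) ?_
  change hitTimes (Prod.map S S) _ _ ∈ F
  rw [← ball_prod_same, ← ball_prod_same, hitTimes_prodMap]
  exact h x₁ x₂ y₁ y₂ _ (lt_min ha hb)

lemma fMixTop_of_ball_common_source (hF : IsFamily F) (hS : Continuous S)
    (h : ∀ x y₁ y₂ : Y, ∀ r > 0,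
      hitTimes S (ball x r) (ball y₁ r) ∩ hitTimes S (ball x r) (ball y₂ r) ∈ F) :
    FMixTop F S := by
  refine fMixTop_of_common_source hF hS ?_
  rintro U V₁ V₂ hU hV₁ hV₂ ⟨x, hx⟩ ⟨y₁, hy₁⟩ ⟨y₂, hy₂⟩
  obtain ⟨a, ha, haU⟩ := Metric.isOpen_iff.1 hU x hx
  obtain ⟨b, hb, hbV₁⟩ := Metric.isOpen_iff.1 hV₁ y₁ hy₁
  obtain ⟨c, hc, hcV₂⟩ := Metric.isOpen_iff.1 hV₂ y₂ hy₂
  let r := min a (min b c)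
  have hrU : ball x r ⊆ U := (ball_subset_ball (by simp [r])).trans haU
  have hrV₁ : ball y₁ r ⊆ V₁ := (ball_subset_ball (by simp [r])).trans hbV₁
  have hrV₂ : ball y₂ r ⊆ V₂ := (ball_subset_ball (by simp [r])).trans hcV₂
  exact hF _ _ (inter_subset_inter (hitTimes_mono hrU hrV₁) (hitTimes_mono hrU hrV₂))
    (h x y₁ y₂ r (lt_min ha (lt_min hb hc)))

/-- The graph of `S` is `δ`-dense in `Y × Y` for the maximum metric. -/
def IsGraphDense (δ : ℝ) (S : Y → Y) : Prop :=
  ∀ x y, ∃ z, dist z x ≤ δ ∧ dist (S z) y ≤ δ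

theorem FMixTop.setOf_isGraphDense_iterate_mem [CompactSpace Y] [Nonempty Y] (hF : IsFamily F)
    (hS : Continuous S) (h : FMixTop F S) {δ : ℝ} (hδ : 0 < δ) :
    {n | IsGraphDense δ S^[n]} ∈ F := by
  obtain ⟨t, -, ht, hcover⟩ := finite_cover_balls_of_compact (isCompact_univ (X := Y)) (half_pos hδ)
  have exists_center (x : Y) : ∃ a ∈ t, x ∈ ball a (δ / 2) := by simpa using hcover (mem_univ x)
  refine hF _ _ ?_ (h.biInter_hitTimes_mem hF hS (ht.toFinset ×ˢ ht.toFinset)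
    (U := fun p => ball p.1 (δ / 2)) (V := fun p => ball p.2 (δ / 2)) (fun _ => isOpen_ball)
    (fun _ => isOpen_ball) (fun _ => nonempty_ball.2 (half_pos hδ))
    (fun _ => nonempty_ball.2 (half_pos hδ)))
  intro n hn x y
  obtain ⟨a, ha, hxa⟩ := exists_center x
  obtain ⟨b, hb, hyb⟩ := exists_center y
  obtain ⟨z, hza, hzb⟩ := mem_hitTimes.1 (mem_iInter₂.1 hn (a, b) (by simp [ha, hb]))
  rw [mem_ball] at hxa hyb hza hzb
  exact ⟨z, by linarith [dist_triangle_right z x a],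
    by linarith [dist_triangle_right (S^[n] z) y b]⟩

end MetricMixing

section TransitSet

variable [PseudoMetricSpace X] {S : X → X} {δ : ℝ} {A B : Set X}

/-- The points `δ`-close to `A` whose image under `S` is `δ`-close to `B`. Closed thickenings make
this set closed whatever `A` and `B` are. -/
def transitSet (S : X → X) (δ : ℝ) (A B : Set X) : Set X :=
  cthickening δ A ∩ S ⁻¹' cthickening δ B

lemma isClosed_transitSet (hS : Continuous S) : IsClosed (transitSet S δ A B) :=
  isClosed_cthickening.inter (isClosed_cthickening.preimage hS)

lemma IsGraphDense.exists_mem_transitSet (h : IsGraphDense δ S) {x y : X} (hx : x ∈ A)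
    (hy : y ∈ B) : ∃ z ∈ transitSet S δ A B, dist z x ≤ δ ∧ dist (S z) y ≤ δ := by
  obtain ⟨z, hzx, hzy⟩ := h x y
  exact ⟨z, ⟨mem_cthickening_of_dist_le _ _ _ _ hx hzx,
    mem_cthickening_of_dist_le _ _ _ _ hy hzy⟩, hzx, hzy⟩

lemma IsGraphDense.transitSet_nonempty (h : IsGraphDense δ S) (hA : A.Nonempty)
    (hB : B.Nonempty) : (transitSet S δ A B).Nonempty :=
  let ⟨z, hz, _⟩ := h.exists_mem_transitSet hA.some_mem hB.some_mem
  ⟨z, hz⟩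

lemma IsGraphDense.hausdorffDist_transitSet_le (h : IsGraphDense δ S) (hδ : 0 ≤ δ)
    (hB : B.Nonempty) : hausdorffDist (transitSet S δ A B) A ≤ δ := by
  refine hausdorffDist_le_of_infDist hδ
    (fun z hz => ENNReal.toReal_le_of_le_ofReal hδ hz.1) fun x hx => ?_
  obtain ⟨z, hz, hzx, -⟩ := h.exists_mem_transitSet hx hB.some_mem
  exact (infDist_le_dist_of_mem hz).trans (dist_comm x z ▸ hzx)

lemma IsGraphDense.hausdorffDist_image_transitSet_le (h : IsGraphDense δ S) (hδ : 0 ≤ δ)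
    (hA : A.Nonempty) : hausdorffDist (S '' transitSet S δ A B) B ≤ δ := by
  refine hausdorffDist_le_of_infDist hδ
    (forall_mem_image.2 fun z hz => ENNReal.toReal_le_of_le_ofReal hδ hz.2) fun y hy => ?_
  obtain ⟨z, hz, -, hzy⟩ := h.exists_mem_transitSet hA.some_mem hy
  exact (infDist_le_dist_of_mem (mem_image_of_mem S hz)).trans (dist_comm y (S z) ▸ hzy)

lemma image_ball_inter_ball_nonempty_of_hausdorffDist_lt [BoundedSpace X] {E : Set X} {x y : X}
    {r : ℝ} (hE : E.Nonempty) (hEx : hausdorffDist E {x} < r) (hEB : hausdorffDist (S '' E) B < r)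
    (hy : y ∈ B) : (S '' ball x r ∩ ball y r).Nonempty := by
  have edist_ne_top {C D : Set X} (hC : C.Nonempty) (hD : D.Nonempty) : hausdorffEDist C D ≠ ⊤ :=
    hausdorffEDist_ne_top_of_nonempty_of_bounded hC hD (.all _) (.all _)
  obtain ⟨_, ⟨z, hz, rfl⟩, hzy⟩ :=
    exists_dist_lt_of_hausdorffDist_lt' hy hEB (edist_ne_top (hE.image S) ⟨y, hy⟩)
  obtain ⟨_, rfl, hzx⟩ :=
    exists_dist_lt_of_hausdorffDist_lt hz hEx (edist_ne_top hE (singleton_nonempty x))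
  exact ⟨S z, mem_image_of_mem S hzx, hzy⟩

end TransitSet

section Hyperspace

lemma coe_iterate_hyper [TopologicalSpace X] {T : X → X} (hT : Continuous T) (n : ℕ)
    (A : NonemptyCompacts X) : ((hyper T hT)^[n] A : Set X) = T^[n] '' A := by
  induction n with
  | zero => exact (image_id _).symm
  | succ n ih =>
    rw [iterate_succ_apply', iterate_succ', image_comp, ← ih]
    rfl

variable [MetricSpace X] [CompactSpace X] {T : X → X} {hT : Continuous T} {F : Set (Set ℕ)}

lemma mem_hitTimes_hyper_of_isGraphDense {n : ℕ} {δ ε : ℝ} (h : IsGraphDense δ T^[n])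
    (hδ : 0 ≤ δ) (hδε : δ < ε) (A B : NonemptyCompacts X) :
    n ∈ hitTimes (hyper T hT) (ball A ε) (ball B ε) := by
  let E : NonemptyCompacts X :=
    ⟨⟨transitSet T^[n] δ A B, (isClosed_transitSet (hT.iterate n)).isCompact⟩,
      h.transitSet_nonempty A.nonempty B.nonempty⟩
  refine mem_hitTimes.2 ⟨E, (?_ : dist E A < ε), (?_ : dist _ B < ε)⟩
  · exact (h.hausdorffDist_transitSet_le hδ B.nonempty).trans_lt hδε
  · rw [NonemptyCompacts.dist_eq, coe_iterate_hyper]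
    exact (h.hausdorffDist_image_transitSet_le hδ A.nonempty).trans_lt hδε

theorem FMixTop.fMixTop_hyper (hF : IsFamily F) (h : FMixTop F T) : FMixTop F (hyper T hT) := by
  refine fMixTop_of_ball hF fun A₁ A₂ B₁ B₂ ε hε => ?_
  have : Nonempty X := A₁.nonempty.to_type
  refine hF _ _ (fun n hn => ?_) (h.setOf_isGraphDense_iterate_mem hF hT (half_pos hε))
  exact ⟨mem_hitTimes_hyper_of_isGraphDense hn (half_pos hε).le (half_lt_self hε) A₁ B₁,
    mem_hitTimes_hyper_of_isGraphDense hn (half_pos hε).le (half_lt_self hε) A₂ B₂⟩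

theorem fMixTop_of_fTransTop_hyper (hF : IsFamily F) (h : FTransTop F (hyper T hT)) :
    FMixTop F T := by
  refine fMixTop_of_ball_common_source hF hT fun x y₁ y₂ r hr => ?_
  refine hF _ _ ?_ (h (ball {x} r) (ball ({y₁} ⊔ {y₂}) r) isOpen_ball isOpen_ball
    (nonempty_ball.2 hr) (nonempty_ball.2 hr))
  intro n hn
  obtain ⟨E, hEx, hEy⟩ := mem_hitTimes.1 hn
  rw [mem_ball, NonemptyCompacts.dist_eq] at hEx hEy
  rw [coe_iterate_hyper] at hEy
  exact ⟨image_ball_inter_ball_nonempty_of_hausdorffDist_lt E.nonempty hEx hEy (.inl rfl),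
    image_ball_inter_ball_nonempty_of_hausdorffDist_lt E.nonempty hEx hEy (.inr rfl)⟩

end Hyperspace

section Cuts

lemma cut_indicator_const {lam : ℝ} (hlam : 0 < lam) (K : Set X) :
    cut (K.indicator fun _ => lam) lam = K := by
  ext x
  by_cases hx : x ∈ K <;> simp [cut, hx, hlam]

lemma sSup_image_mem_Icc {A : X → ℝ} (hA : ∀ x, A x ∈ Icc (0 : ℝ) 1) (K : Set X) :
    sSup (A '' K) ∈ Icc (0 : ℝ) 1 :=
  ⟨Real.sSup_nonneg (forall_mem_image.2 fun x _ => (hA x).1),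
    Real.sSup_le (forall_mem_image.2 fun x _ => (hA x).2) zero_le_one⟩

variable [TopologicalSpace X] {A : X → ℝ} {lam α : ℝ}

lemma isClosed_cut (hA : UpperSemicontinuous A) (α : ℝ) : IsClosed (cut A α) :=
  upperSemicontinuous_iff_isClosed_preimage.1 hA α

lemma isFuzzy_of_isClosed_cut (hA : ∀ x, A x ∈ Icc (0 : ℝ) 1)
    (hcut : ∀ α > 0, IsClosed (cut A α)) : IsFuzzy A := by
  refine ⟨hA, upperSemicontinuous_iff_isClosed_preimage.2 fun α => ?_⟩
  obtain hα | hα := le_or_gt α 0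
  · rw [eq_univ_of_forall fun x => mem_preimage.2 (mem_Ici.2 (hα.trans (hA x).1))]
    exact isClosed_univ
  · exact hcut α hα

lemma le_sSup_image_iff_of_isCompact (hA : UpperSemicontinuous A) {K : Set X} (hK : IsCompact K)
    (hne : K.Nonempty) : α ≤ sSup (A '' K) ↔ ∃ x ∈ K, α ≤ A x := by
  obtain ⟨a, haK, hmax⟩ := (hA.upperSemicontinuousOn K).exists_isMaxOn hne hK
  have hgreatest : IsGreatest (A '' K) (A a) := ⟨mem_image_of_mem A haK, forall_mem_image.2 hmax⟩
  rw [hgreatest.csSup_eq]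
  exact ⟨fun h => ⟨a, haK, h⟩, fun ⟨x, hx, h⟩ => h.trans (hmax hx)⟩

lemma cut_nonempty_iff (hA : A ∈ Feq X lam) : (cut A α).Nonempty ↔ α ≤ lam := by
  obtain ⟨-, ⟨x, hx⟩, hle⟩ := hA
  exact ⟨fun ⟨y, hy⟩ => le_trans hy (hle y), fun hα => ⟨x, hα.trans_eq hx.symm⟩⟩

lemma mem_Feq_of_cut_nonempty_iff (hlam : 0 < lam) (hA : IsFuzzy A)
    (hcut : ∀ α > 0, (cut A α).Nonempty ↔ α ≤ lam) : A ∈ Feq X lam := by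
  have hle (x : X) : A x ≤ lam := by
    obtain hx | hx := le_or_gt (A x) 0
    · exact hx.trans hlam.le
    · exact (hcut (A x) hx).1 ⟨x, le_refl (A x)⟩
  obtain ⟨x, hx⟩ := (hcut lam hlam).2 le_rfl
  exact ⟨hA, ⟨x, (hle x).antisymm hx⟩, hle⟩

lemma indicator_const_mem_Feq (hlam : lam ∈ Ioc (0 : ℝ) 1) {K : Set X} (hK : IsClosed K)
    (hne : K.Nonempty) : K.indicator (fun _ => lam) ∈ Feq X lam := by
  have hle (x : X) : K.indicator (fun _ => lam) x ≤ lam :=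
    indicator_le_self' (fun _ _ => hlam.1.le) x
  obtain ⟨x, hx⟩ := hne
  exact ⟨⟨fun y => ⟨indicator_nonneg (fun _ _ => hlam.1.le) y, (hle y).trans hlam.2⟩,
    hK.upperSemicontinuous_indicator hlam.1.le⟩, ⟨x, indicator_of_mem hx _⟩, hle⟩

end Cuts

section Zadeh

variable [TopologicalSpace X] [CompactSpace X] {T : X → X} {A : X → ℝ} {lam α : ℝ}

-- Off the range of `T` the supremum is over `∅`, hence `0`, which no positive cut sees.
lemma cut_zadeh [T1Space X] (hT : Continuous T) (hA : UpperSemicontinuous A) (hα : 0 < α) :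
    cut (zadeh T A) α = T '' cut A α := by
  ext x
  change α ≤ sSup (A '' (T ⁻¹' {x})) ↔ _
  obtain hfiber | hfiber := (T ⁻¹' {x}).eq_empty_or_nonempty
  · rw [hfiber, image_empty, Real.sSup_empty]
    refine iff_of_false hα.not_ge ?_
    rintro ⟨y, -, hy⟩
    exact notMem_empty y (hfiber ▸ hy)
  · rw [le_sSup_image_iff_of_isCompact hA (isClosed_singleton.preimage hT).isCompact hfiber]
    exact exists_congr fun y => and_comm

variable [T2Space X]

lemma isFuzzy_zadeh (hT : Continuous T) (hA : IsFuzzy A) : IsFuzzy (zadeh T A) := by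
  refine isFuzzy_of_isClosed_cut (fun x => sSup_image_mem_Icc hA.1 _) fun α hα => ?_
  rw [cut_zadeh hT hA.2 hα]
  exact ((isClosed_cut hA.2 α).isCompact.image hT).isClosed

lemma isFuzzy_iterate_zadeh (hT : Continuous T) (hA : IsFuzzy A) (n : ℕ) :
    IsFuzzy ((zadeh T)^[n] A) :=
  Iterate.rec IsFuzzy hA (fun _ => isFuzzy_zadeh hT) n

lemma cut_iterate_zadeh (hT : Continuous T) (hA : IsFuzzy A) (hα : 0 < α) (n : ℕ) :
    cut ((zadeh T)^[n] A) α = T^[n] '' cut A α := by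
  induction n with
  | zero => exact (image_id _).symm
  | succ n ih =>
    rw [iterate_succ_apply', cut_zadeh hT (isFuzzy_iterate_zadeh hT hA n).2 hα, ih,
      iterate_succ', image_comp]

lemma iterate_zadeh_mem_Feq (hT : Continuous T) (hlam : 0 < lam) (hA : A ∈ Feq X lam) (n : ℕ) :
    (zadeh T)^[n] A ∈ Feq X lam :=
  mem_Feq_of_cut_nonempty_iff hlam (isFuzzy_iterate_zadeh hT hA.1 n) fun α hα => by
    rw [cut_iterate_zadeh hT hA.1 hα, image_nonempty, cut_nonempty_iff hA]

end Zadeh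

section LevelwiseMetric

variable [MetricSpace X] {A B : X → ℝ} {lam α δ : ℝ}

lemma eHd_eq_hausdorffDist {K L : Set X} (h : K.Nonempty ↔ L.Nonempty) :
    eHd X K L = hausdorffDist K L := by
  refine if_pos ?_
  simp only [← not_nonempty_iff_eq_empty, h, and_self]
  exact em _

lemma eHd_le_diam_univ [BoundedSpace X] (K L : Set X) : eHd X K L ≤ diam (univ : Set X) := by
  unfold eHd
  split_ifs with h
  · obtain ⟨hK, hL⟩ | ⟨rfl, rfl⟩ := h
    · exact (hausdorffDist_le_diam hK (.all _) hL (.all _)).trans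
        (diam_mono (subset_univ _) (.all _))
    · exact hausdorffDist_empty.trans_le diam_nonneg
  · exact le_rfl

lemma eHd_cut_eq_hausdorffDist (hA : A ∈ Feq X lam) (hB : B ∈ Feq X lam) :
    eHd X (cut A α) (cut B α) = hausdorffDist (cut A α) (cut B α) :=
  eHd_eq_hausdorffDist ((cut_nonempty_iff hA).trans (cut_nonempty_iff hB).symm)

lemma hausdorffDist_cut_le_dinf [BoundedSpace X] (hA : A ∈ Feq X lam) (hB : B ∈ Feq X lam)
    (hα : α ∈ Ioc (0 : ℝ) 1) : hausdorffDist (cut A α) (cut B α) ≤ dinf A B := by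
  refine le_csSup ⟨diam (univ : Set X), ?_⟩ ⟨α, hα, (eHd_cut_eq_hausdorffDist hA hB).symm⟩
  rintro _ ⟨β, -, rfl⟩
  exact eHd_le_diam_univ _ _

lemma dinf_le_of_hausdorffDist_cut_le (hA : A ∈ Feq X lam) (hB : B ∈ Feq X lam) (hδ : 0 ≤ δ)
    (h : ∀ α ∈ Ioc 0 lam, hausdorffDist (cut A α) (cut B α) ≤ δ) : dinf A B ≤ δ := by
  refine csSup_le ⟨_, 1, right_mem_Ioc.2 one_pos, rfl⟩ ?_
  rintro _ ⟨α, hα, rfl⟩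
  rw [eHd_cut_eq_hausdorffDist hA hB]
  obtain hαlam | hαlam := le_or_gt α lam
  · exact h α ⟨hα.1, hαlam⟩
  · rw [not_nonempty_iff_eq_empty.1 (mt (cut_nonempty_iff hA).1 hαlam.not_ge),
      hausdorffDist_empty']
    exact hδ

end LevelwiseMetric

section FuzzyTransit

variable [PseudoMetricSpace X] {S : X → X} {A B : X → ℝ} {lam δ : ℝ}

/-- The closed `δ`-thickening of a fuzzy set: for `A` upper semicontinuous on a proper space and
`0 ≤ δ`, its cuts are the closed `δ`-thickenings of the cuts of `A`. -/
noncomputable def fuzzyThickening (δ : ℝ) (A : X → ℝ) : X → ℝ :=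
  fun z => sSup (A '' closedBall z δ)

/-- The fuzzy analogue of `transitSet`: its cuts are the transit sets from the cuts of `A` to those
of `B`. -/
noncomputable def fuzzyTransit (S : X → X) (δ : ℝ) (A B : X → ℝ) : X → ℝ :=
  fun z => min (fuzzyThickening δ A z) (fuzzyThickening δ B (S z))

variable [ProperSpace X]

lemma cut_fuzzyThickening (hA : UpperSemicontinuous A) (hδ : 0 ≤ δ) (α : ℝ) :
    cut (fuzzyThickening δ A) α = cthickening δ (cut A α) := by
  ext z
  rw [(isClosed_cut hA α).cthickening_eq_biUnion_closedBall hδ, mem_iUnion₂]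
  change α ≤ sSup (A '' closedBall z δ) ↔ _
  rw [le_sSup_image_iff_of_isCompact hA (isCompact_closedBall z δ) (nonempty_closedBall.2 hδ)]
  exact exists_congr fun x => by rw [mem_closedBall_comm, exists_prop, and_comm]; rfl

lemma cut_fuzzyTransit (hA : UpperSemicontinuous A) (hB : UpperSemicontinuous B) (hδ : 0 ≤ δ)
    (α : ℝ) : cut (fuzzyTransit S δ A B) α = transitSet S δ (cut A α) (cut B α) := by
  rw [transitSet, ← cut_fuzzyThickening hA hδ, ← cut_fuzzyThickening hB hδ]
  ext z
  change α ≤ min _ _ ↔ _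
  exact le_min_iff

lemma isFuzzy_fuzzyTransit (hS : Continuous S) (hA : IsFuzzy A) (hB : IsFuzzy B) (hδ : 0 ≤ δ) :
    IsFuzzy (fuzzyTransit S δ A B) := by
  refine isFuzzy_of_isClosed_cut (fun z => ?_) fun α _ => ?_
  · have hAz := sSup_image_mem_Icc hA.1 (closedBall z δ)
    have hBz := sSup_image_mem_Icc hB.1 (closedBall (S z) δ)
    exact ⟨le_min hAz.1 hBz.1, min_le_of_left_le hAz.2⟩
  · rw [cut_fuzzyTransit hA.2 hB.2 hδ]
    exact isClosed_transitSet hS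

lemma IsGraphDense.fuzzyTransit_mem_Feq (h : IsGraphDense δ S) (hS : Continuous S) (hδ : 0 ≤ δ)
    (hlam : 0 < lam) (hA : A ∈ Feq X lam) (hB : B ∈ Feq X lam) :
    fuzzyTransit S δ A B ∈ Feq X lam := by
  refine mem_Feq_of_cut_nonempty_iff hlam (isFuzzy_fuzzyTransit hS hA.1 hB.1 hδ) fun α _ => ?_
  rw [cut_fuzzyTransit hA.1.2 hB.1.2 hδ]
  constructor
  · rintro ⟨z, hz, -⟩
    refine (cut_nonempty_iff hA).1 (nonempty_iff_ne_empty.2 fun hempty => ?_)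
    rwa [hempty, cthickening_empty] at hz
  · intro hα
    exact h.transitSet_nonempty ((cut_nonempty_iff hA).2 hα) ((cut_nonempty_iff hB).2 hα)

end FuzzyTransit

section FuzzyMixing

lemma FMixOn.fTransOn {F : Set (Set ℕ)} {ρ : Y → Y → ℝ} {S : Y → Y} {C : Set Y}
    (hF : IsFamily F) (h : FMixOn F ρ S C) : FTransOn F ρ S C := by
  intro A hA B hB ε hε
  refine hF _ _ ?_ (h A hA A hA B hB B hB ε hε)
  rintro n ⟨E, hE, _, _, hEA, _, hEB, _⟩
  exact ⟨E, hE, hEA, hEB⟩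

variable [MetricSpace X] [CompactSpace X] {T : X → X} {F : Set (Set ℕ)} {lam : ℝ}

lemma exists_mem_Feq_dinf_le_of_isGraphDense (hT : Continuous T) {n : ℕ} {δ : ℝ}
    (h : IsGraphDense δ T^[n]) (hδ : 0 ≤ δ) (hlam : 0 < lam) {A B : X → ℝ} (hA : A ∈ Feq X lam)
    (hB : B ∈ Feq X lam) : ∃ E ∈ Feq X lam, dinf E A ≤ δ ∧ dinf ((zadeh T)^[n] E) B ≤ δ := by
  have hE := h.fuzzyTransit_mem_Feq (hT.iterate n) hδ hlam hA hB
  refine ⟨fuzzyTransit T^[n] δ A B, hE, dinf_le_of_hausdorffDist_cut_le hE hA hδ ?_,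
    dinf_le_of_hausdorffDist_cut_le (iterate_zadeh_mem_Feq hT hlam hE n) hB hδ ?_⟩
  · rintro α ⟨-, hα⟩
    rw [cut_fuzzyTransit hA.1.2 hB.1.2 hδ]
    exact h.hausdorffDist_transitSet_le hδ ((cut_nonempty_iff hB).2 hα)
  · rintro α ⟨hα₀, hα⟩
    rw [cut_iterate_zadeh hT hE.1 hα₀, cut_fuzzyTransit hA.1.2 hB.1.2 hδ]
    exact h.hausdorffDist_image_transitSet_le hδ ((cut_nonempty_iff hA).2 hα)

theorem FMixTop.fMixOn_Feq (hF : IsFamily F) (hT : Continuous T) (h : FMixTop F T)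
    (hlam : 0 < lam) : FMixOn F dinf (zadeh T) (Feq X lam) := by
  intro A₁ hA₁ A₂ hA₂ B₁ hB₁ B₂ hB₂ ε hε
  have : Nonempty X := let ⟨x, _⟩ := hA₁.2.1; ⟨x⟩
  refine hF _ _ (fun n hn => ?_) (h.setOf_isGraphDense_iterate_mem hF hT (half_pos hε))
  obtain ⟨E₁, hE₁, hEA₁, hEB₁⟩ :=
    exists_mem_Feq_dinf_le_of_isGraphDense hT hn (half_pos hε).le hlam hA₁ hB₁
  obtain ⟨E₂, hE₂, hEA₂, hEB₂⟩ :=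
    exists_mem_Feq_dinf_le_of_isGraphDense hT hn (half_pos hε).le hlam hA₂ hB₂
  exact ⟨E₁, hE₁, E₂, hE₂, by linarith, by linarith, by linarith, by linarith⟩

theorem fMixTop_of_fTransOn_Feq (hF : IsFamily F) (hT : Continuous T)
    (hlam : lam ∈ Ioc (0 : ℝ) 1) (h : FTransOn F dinf (zadeh T) (Feq X lam)) : FMixTop F T := by
  refine fMixTop_of_ball_common_source hF hT fun x y₁ y₂ r hr => ?_
  have hx := indicator_const_mem_Feq hlam (isClosed_singleton (x := x)) (singleton_nonempty x)
  have hy := indicator_const_mem_Feq hlam (toFinite {y₁, y₂}).isClosed (insert_nonempty y₁ {y₂})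
  refine hF _ _ ?_ (h _ hx _ hy r hr)
  rintro n ⟨E, hE, hEx, hEy⟩
  have hEx' := (hausdorffDist_cut_le_dinf hE hx hlam).trans_lt hEx
  have hTE := iterate_zadeh_mem_Feq hT hlam.1 hE n
  have hEy' := (hausdorffDist_cut_le_dinf hTE hy hlam).trans_lt hEy
  rw [cut_indicator_const hlam.1] at hEx' hEy'
  rw [cut_iterate_zadeh hT hE.1 hlam.1] at hEy'
  have hne : (cut E lam).Nonempty := (cut_nonempty_iff hE).2 le_rfl
  exact ⟨image_ball_inter_ball_nonempty_of_hausdorffDist_lt hne hEx' hEy' (.inl rfl),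
    image_ball_inter_ball_nonempty_of_hausdorffDist_lt hne hEx' hEy' (.inr rfl)⟩

end FuzzyMixing

theorem family_mixing_tfae_general {X : Type*} [MetricSpace X] [CompactSpace X]
    (T : X → X) (hT : Continuous T) (F : Set (Set ℕ)) (hF : IsFamily F) :
    List.TFAE
      [FMixTop F T,
       FTransTop F (hyper T hT),
       FMixTop F (hyper T hT),
       ∀ lam ∈ Set.Ioc (0:ℝ) 1, FTransOn F dinf (zadeh T) (Feq X lam),
       ∀ lam ∈ Set.Ioc (0:ℝ) 1, FMixOn F dinf (zadeh T) (Feq X lam),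
       ∃ lam ∈ Set.Ioc (0:ℝ) 1, FTransOn F dinf (zadeh T) (Feq X lam),
       ∃ lam ∈ Set.Ioc (0:ℝ) 1, FMixOn F dinf (zadeh T) (Feq X lam)] := by
  have one_mem : (1 : ℝ) ∈ Ioc (0 : ℝ) 1 := right_mem_Ioc.2 one_pos
  tfae_have 1 → 3 := FMixTop.fMixTop_hyper hF
  tfae_have 3 → 2 := FMixTop.fTransTop
  tfae_have 2 → 1 := fMixTop_of_fTransTop_hyper hF
  tfae_have 1 → 5 := fun h _ hlam => h.fMixOn_Feq hF hT hlam.1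
  tfae_have 5 → 4 := fun h lam hlam => (h lam hlam).fTransOn hF
  tfae_have 4 → 6 := fun h => ⟨1, one_mem, h 1 one_mem⟩
  tfae_have 5 → 7 := fun h => ⟨1, one_mem, h 1 one_mem⟩
  tfae_have 7 → 6 := fun ⟨lam, hlam, h⟩ => ⟨lam, hlam, h.fTransOn hF⟩
  tfae_have 6 → 1 := fun ⟨_, hlam, h⟩ => fMixTop_of_fTransOn_Feq hF hT hlam h
  tfae_finish

/-- For a full Furstenberg family `ℱ`: `ℱ`-mixing of `(X,T)` is equivalent to
`ℱ`-transitivity / `ℱ`-mixing of `(K(X), T_K)` and of the Zadeh extension on every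
(equivalently, some) `𝔽^{=λ}(X)`. -/
theorem family_mixing_tfae {X : Type*} [MetricSpace X] [CompactSpace X] [Nontrivial X]
    (T : X → X) (hT : Continuous T) (hTs : Function.Surjective T)
    (F : Set (Set ℕ)) (hF : FullFam F) :
    List.TFAE
      [FMixTop F T,
       FTransTop F (hyper T hT),
       FMixTop F (hyper T hT),
       ∀ lam ∈ Set.Ioc (0:ℝ) 1, FTransOn F dinf (zadeh T) (Feq X lam),
       ∀ lam ∈ Set.Ioc (0:ℝ) 1, FMixOn F dinf (zadeh T) (Feq X lam),
       ∃ lam ∈ Set.Ioc (0:ℝ) 1, FTransOn F dinf (zadeh T) (Feq X lam),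
       ∃ lam ∈ Set.Ioc (0:ℝ) 1, FMixOn F dinf (zadeh T) (Feq X lam)] :=
  family_mixing_tfae_general T hT F hF.1
end

section
/- Let (X, T) be a dynamical system. If the induced hyperspace system (K(X), T_K) is mildly mixing, then for every λ ∈ (0,1] the Zadeh extension system (𝔽^{=λ}(X), T_F|_{𝔽^{=λ}(X)}) with the levelwise metric d_∞ is mildly mixing. -/
open Metric Set TopologicalSpace Filter Function
open scoped Classical

variable {X Y : Type*}

/-- Mild mixing on a topological space: `S` is weakly disjoint with every transitive
dynamical system (a compact metric space with at least two points together with a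
continuous surjection). -/
def MildMixTop [TopologicalSpace Y] (S : Y → Y) : Prop :=
  ∀ (Z : Type) [MetricSpace Z] [CompactSpace Z] [Nontrivial Z] (R : Z → Z),
    Continuous R → Function.Surjective R → TopTrans R →
      TopTrans (fun p : Y × Z => (S p.1, R p.2))

/-- Mild mixing of `S` restricted to `C` (with the metric `ρ`): the product of the
subsystem with every transitive dynamical system is transitive, phrased via balls. -/
def MildMixOn (ρ : Y → Y → ℝ) (S : Y → Y) (C : Set Y) : Prop :=
  ∀ (Z : Type) [MetricSpace Z] [CompactSpace Z] [Nontrivial Z] (R : Z → Z),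
    Continuous R → Function.Surjective R → TopTrans R →
      ∀ A ∈ C, ∀ B ∈ C, ∀ z₁ z₂ : Z, ∀ ε > 0, ∃ n : ℕ, ∃ E ∈ C, ∃ w : Z,
        ρ E A < ε ∧ dist w z₁ < ε ∧ ρ (S^[n] E) B < ε ∧ dist (R^[n] w) z₂ < ε

/-!
A point of the finite power `X ^ ι` is a configuration of points of `X`, and pushing fixed weights
`c : ι → ℝ` forward along it gives a fuzzy set, equivariantly for `T × ⋯ × T` and Zadeh's extension.

Mild mixing passes from `K(X)` to `X` (look at the closed sets contained in an open set), and from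
`X` to its finite powers, since `T × R` is again a transitive system whenever `R` is one. Given
`A, B ∈ 𝔽^{=λ}(X)`, choose finite sets `s, t ⊆ X` of points on which `A` and `B` nearly realise all
their cuts. Mild mixing of `X ^ (s × t)` moves a configuration close to `(a, b) ↦ a` onto one close
to `(a, b) ↦ b`. With the weights `min (A a) (B b)`, its push-forwards are close to `A` and `B`:
since `A` and `B` have the same maximum, every `a` is paired with some `b` for which the minimum is
`A a`, and vice versa.
-/

theorem TopTrans.of_semiconj {Z : Type*} [TopologicalSpace Y] [TopologicalSpace Z] {f : Y → Z}
    {S : Y → Y} {R : Z → Z} (hS : TopTrans S) (hf : Continuous f) (hfs : Surjective f)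
    (h : Semiconj f S R) : TopTrans R := by
  intro U V hU hV hUne hVne
  obtain ⟨n, _, ⟨y, hyU, rfl⟩, hyV⟩ := hS (f ⁻¹' U) (f ⁻¹' V) (hU.preimage hf) (hV.preimage hf)
    (hUne.preimage hfs) (hVne.preimage hfs)
  exact ⟨n, f (S^[n] y), ⟨f y, hyU, (h.iterate_right n y).symm⟩, hyV⟩

theorem coe_hyper_iterate [TopologicalSpace X] {T : X → X} (hT : Continuous T) (n : ℕ)
    (K : NonemptyCompacts X) : ((hyper T hT)^[n] K : Set X) = T^[n] '' K := by
  have h : Semiconj ((↑) : NonemptyCompacts X → Set X) (hyper T hT) (image T) := fun _ => rfl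
  rw [h.iterate_right n K, image_iterate_eq]

namespace MildMixTop

variable [TopologicalSpace Y] {S : Y → Y}

theorem of_semiconj {Y' : Type*} [TopologicalSpace Y'] {f : Y → Y'} {S' : Y' → Y'}
    (hS : MildMixTop S) (hf : Continuous f) (hfs : Surjective f) (h : Semiconj f S S') :
    MildMixTop S' := by
  intro Z _ _ _ R hR hRs hRt
  exact (hS Z R hR hRs hRt).of_semiconj (f := Prod.map f id) (hf.prodMap continuous_id)
    (hfs.prodMap surjective_id) fun p => Prod.ext (h p.1) rfl

theorem of_subsingleton [Subsingleton Y] [Nonempty Y] (S : Y → Y) : MildMixTop S := by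
  intro Z _ _ _ R _ _ hRt
  obtain ⟨y⟩ := ‹Nonempty Y›
  exact hRt.of_semiconj (f := fun z => (y, z)) (by fun_prop)
    (fun p => ⟨p.2, Prod.ext (Subsingleton.elim _ _) rfl⟩)
    fun z => Prod.ext (Subsingleton.elim _ _) rfl

/-- `MildMixTop` only tests against systems in `Type`; the Kuratowski embedding replaces a compact
metric space in any universe by one in `Type`. -/
theorem topTrans_prodMap (hS : MildMixTop S) {Z : Type*} [MetricSpace Z] [CompactSpace Z]
    [Nontrivial Z] {R : Z → Z} (hR : Continuous R) (hRs : Surjective R) (hRt : TopTrans R) :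
    TopTrans (Prod.map S R) := by
  let e : Z ≃ᵢ range (kuratowskiEmbedding Z) :=
    (kuratowskiEmbedding.isometry Z).isometryEquivOnRange
  have : CompactSpace (range (kuratowskiEmbedding Z)) := e.toHomeomorph.compactSpace
  have : Nontrivial (range (kuratowskiEmbedding Z)) := e.symm.toEquiv.nontrivial
  have hconj : Semiconj e R (e ∘ R ∘ e.symm) := fun z => by simp
  have hconj_symm : Semiconj e.symm (e ∘ R ∘ e.symm) R := fun z => by simp
  have hprod := hS _ (e ∘ R ∘ e.symm) (e.continuous.comp (hR.comp e.symm.continuous))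
    (e.surjective.comp (hRs.comp e.symm.surjective))
    (hRt.of_semiconj e.continuous e.surjective hconj)
  exact hprod.of_semiconj (f := Prod.map id e.symm) (continuous_id.prodMap e.symm.continuous)
    (surjective_id.prodMap e.symm.surjective) fun p => Prod.ext rfl (hconj_symm p.2)

theorem prodMap [MetricSpace X] [CompactSpace X] [Nonempty X] {T : X → X} (hS : MildMixTop S)
    (hT : MildMixTop T) (hTc : Continuous T) (hTs : Surjective T) :
    MildMixTop (Prod.map S T) := by
  intro Z _ _ _ R hR hRs hRt
  have hassoc : TopTrans (Prod.map S (Prod.map T R)) :=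
    hS.topTrans_prodMap (hTc.prodMap hR) (hTs.prodMap hRs) (hT Z R hR hRs hRt)
  exact hassoc.of_semiconj (Homeomorph.prodAssoc Y X Z).symm.continuous
    (Homeomorph.prodAssoc Y X Z).symm.surjective fun _ => rfl

theorem piMap [MetricSpace X] [CompactSpace X] [Nonempty X] {T : X → X} (hT : MildMixTop T)
    (hTc : Continuous T) (hTs : Surjective T) (ι : Type*) [Finite ι] :
    MildMixTop (Pi.map fun _ : ι => T) := by
  induction ι using Finite.induction_empty_option with
  | of_equiv e ih =>
    exact ih.of_semiconj (f := fun x => x ∘ e.symm) (by fun_prop)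
      e.symm.injective.surjective_comp_right fun _ => rfl
  | h_empty => exact of_subsingleton _
  | @h_option α _ ih =>
    refine (ih.prodMap hT hTc hTs).of_semiconj
      (f := fun p : (α → X) × X => fun o : Option α => o.elim p.2 p.1) ?_ ?_ ?_
    · exact continuous_pi fun o => by cases o <;> dsimp only [Option.elim] <;> fun_prop
    · exact fun x => ⟨(fun a => x (some a), x none), funext fun o => by cases o <;> rfl⟩
    · exact fun p => funext fun o => by cases o <;> rfl

theorem of_hyper [TopologicalSpace X] {T : X → X} {hT : Continuous T}
    (hK : MildMixTop (hyper T hT)) : MildMixTop T := by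
  intro Z _ _ _ R hR hRs hRt P Q hP hQ ⟨⟨x₁, z₁⟩, hxz₁⟩ ⟨⟨x₂, z₂⟩, hxz₂⟩
  obtain ⟨U₁, W₁, hU₁, hW₁, hx₁, hz₁, hP⟩ := isOpen_prod_iff.1 hP x₁ z₁ hxz₁
  obtain ⟨U₂, W₂, hU₂, hW₂, hx₂, hz₂, hQ⟩ := isOpen_prod_iff.1 hQ x₂ z₂ hxz₂
  obtain ⟨n, _, ⟨⟨K, w⟩, ⟨hKU, hw⟩, rfl⟩, hKw⟩ := hK Z R hR hRs hRt
    ({K : NonemptyCompacts X | (K : Set X) ⊆ U₁} ×ˢ W₁)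
    ({K : NonemptyCompacts X | (K : Set X) ⊆ U₂} ×ˢ W₂)
    ((NonemptyCompacts.isOpen_subsets_of_isOpen hU₁).prod hW₁)
    ((NonemptyCompacts.isOpen_subsets_of_isOpen hU₂).prod hW₂)
    ⟨({x₁}, z₁), by simpa using hx₁, hz₁⟩ ⟨({x₂}, z₂), by simpa using hx₂, hz₂⟩
  obtain ⟨hTKU, hRw⟩ : ((hyper T hT)^[n] K : Set X) ⊆ U₂ ∧ R^[n] w ∈ W₂ := by
    change (Prod.map (hyper T hT) R)^[n] (K, w) ∈ _ at hKw
    rwa [Prod.map_iterate] at hKw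
  rw [coe_hyper_iterate] at hTKU
  obtain ⟨x, hx⟩ := K.nonempty
  refine ⟨n, _, ⟨(x, w), hP ⟨hKU hx, hw⟩, rfl⟩, ?_⟩
  change (Prod.map T R)^[n] (x, w) ∈ Q
  rw [Prod.map_iterate]
  exact hQ ⟨hTKU (mem_image_of_mem _ hx), hRw⟩

theorem mildMixOn_univ [PseudoMetricSpace X] {T : X → X} (hT : MildMixTop T) :
    MildMixOn dist T univ := by
  intro Z _ _ _ R hR hRs hRt x₁ _ x₂ _ z₁ z₂ ε hε
  obtain ⟨n, _, ⟨⟨x, w⟩, ⟨hx, hw⟩, rfl⟩, hxw⟩ := hT Z R hR hRs hRt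
    (ball x₁ ε ×ˢ ball z₁ ε) (ball x₂ ε ×ˢ ball z₂ ε)
    (isOpen_ball.prod isOpen_ball) (isOpen_ball.prod isOpen_ball)
    ⟨(x₁, z₁), mem_ball_self hε, mem_ball_self hε⟩ ⟨(x₂, z₂), mem_ball_self hε, mem_ball_self hε⟩
  change (Prod.map T R)^[n] (x, w) ∈ _ at hxw
  rw [Prod.map_iterate] at hxw
  exact ⟨n, x, mem_univ x, w, hx, hw, hxw.1, hxw.2⟩

end MildMixTop

section zadehMap

variable {ι : Type*}

/-- Zadeh's extension of a map between two possibly different sets: the push-forward of the fuzzy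
set `c` along `f`. It takes the value `sSup ∅ = 0` off the range of `f`, and
`zadehMap T = zadeh T` definitionally for a self-map `T`. -/
noncomputable def zadehMap (f : ι → X) (c : ι → ℝ) : X → ℝ :=
  fun x => sSup (c '' (f ⁻¹' {x}))

variable {f : ι → X} {c : ι → ℝ}

theorem le_zadehMap (hc : BddAbove (range c)) (f : ι → X) (i : ι) : c i ≤ zadehMap f c (f i) :=
  le_csSup (hc.mono (image_subset_range _ _)) ⟨i, rfl, rfl⟩

theorem zadehMap_le {x : X} {r : ℝ} (hr : 0 ≤ r) (h : ∀ i, f i = x → c i ≤ r) :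
    zadehMap f c x ≤ r :=
  Real.sSup_le (forall_mem_image.2 h) hr

theorem zadehMap_nonneg (hc : ∀ i, 0 ≤ c i) (f : ι → X) (x : X) : 0 ≤ zadehMap f c x :=
  Real.sSup_nonneg (forall_mem_image.2 fun i _ => hc i)

theorem bddAbove_range_zadehMap (hc : BddAbove (range c)) (f : ι → X) :
    BddAbove (range (zadehMap f c)) := by
  obtain ⟨r, hr⟩ := hc
  exact ⟨max r 0, forall_mem_range.2 fun x =>
    zadehMap_le (le_max_right r 0) fun i _ => (hr (mem_range_self i)).trans (le_max_left r 0)⟩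

theorem zadehMap_zadehMap (hc : BddAbove (range c)) (hc₀ : ∀ i, 0 ≤ c i) (f : ι → X)
    (g : X → Y) : zadehMap g (zadehMap f c) = zadehMap (g ∘ f) c := by
  funext y
  apply le_antisymm
  · refine zadehMap_le (zadehMap_nonneg hc₀ _ y) ?_
    rintro x rfl
    refine zadehMap_le (zadehMap_nonneg hc₀ _ _) ?_
    rintro i rfl
    exact le_zadehMap hc (g ∘ f) i
  · refine zadehMap_le (zadehMap_nonneg (zadehMap_nonneg hc₀ f) g y) ?_
    rintro i rfl
    calc c i ≤ zadehMap f c (f i) := le_zadehMap hc f i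
      _ ≤ zadehMap g (zadehMap f c) (g (f i)) :=
        le_zadehMap (bddAbove_range_zadehMap hc f) g (f i)

theorem zadeh_iterate_zadehMap (hc : BddAbove (range c)) (hc₀ : ∀ i, 0 ≤ c i) (T : X → X)
    (f : ι → X) (n : ℕ) : (zadeh T)^[n] (zadehMap f c) = zadehMap (T^[n] ∘ f) c := by
  induction n with
  | zero => rfl
  | succ n ih =>
    rw [iterate_succ_apply', ih, iterate_succ', comp_assoc]
    exact zadehMap_zadehMap hc hc₀ (T^[n] ∘ f) T

theorem exists_eq_zadehMap_of_pos [Finite ι] {x : X} (hx : 0 < zadehMap f c x) :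
    ∃ i, f i = x ∧ c i = zadehMap f c x := by
  have hne : (c '' (f ⁻¹' {x})).Nonempty := by
    by_contra! hempty
    simp [zadehMap, hempty] at hx
  exact hne.csSup_mem (toFinite _)

theorem upperSemicontinuous_zadehMap [Finite ι] [TopologicalSpace X] [T1Space X]
    (hc : ∀ i, 0 ≤ c i) (f : ι → X) : UpperSemicontinuous (zadehMap f c) := by
  rw [upperSemicontinuous_iff_isClosed_preimage]
  intro α
  rcases le_or_gt α 0 with hα | hα
  · have huniv : zadehMap f c ⁻¹' Ici α = univ :=
      eq_univ_of_forall fun x => hα.trans (zadehMap_nonneg hc f x)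
    exact huniv ▸ isClosed_univ
  · refine ((finite_range f).subset fun x (hx : α ≤ _) => ?_).isClosed
    obtain ⟨i, hi, -⟩ := exists_eq_zadehMap_of_pos (hα.trans_le hx)
    exact ⟨i, hi⟩

theorem zadehMap_mem_Feq [Finite ι] [TopologicalSpace X] [T1Space X] {lam : ℝ} (hlam : lam ≤ 1)
    (hc₀ : ∀ i, 0 ≤ c i) (hc : IsGreatest (range c) lam) (f : ι → X) :
    zadehMap f c ∈ Feq X lam := by
  obtain ⟨⟨i, rfl⟩, hmax⟩ := hc
  have hle : ∀ x, zadehMap f c x ≤ c i := fun x =>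
    zadehMap_le (hc₀ i) fun j _ => hmax (mem_range_self j)
  exact ⟨⟨fun x => ⟨zadehMap_nonneg hc₀ f x, (hle x).trans hlam⟩,
      upperSemicontinuous_zadehMap hc₀ f⟩,
    ⟨f i, (hle _).antisymm (le_zadehMap ⟨c i, hmax⟩ f i)⟩, hle⟩

end zadehMap

theorem dinf_le [MetricSpace X] {A B : X → ℝ} {r : ℝ} (hr : 0 ≤ r)
    (hAB : ∀ x, 0 < A x → ∃ y, A x ≤ B y ∧ dist x y ≤ r)
    (hBA : ∀ x, 0 < B x → ∃ y, B x ≤ A y ∧ dist x y ≤ r) : dinf A B ≤ r := by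
  refine Real.sSup_le ?_ hr
  rintro _ ⟨α, ⟨hα, -⟩, rfl⟩
  have hcutAB : ∀ x ∈ cut A α, ∃ y ∈ cut B α, dist x y ≤ r := fun x hx =>
    let ⟨y, hy, hxy⟩ := hAB x (hα.trans_le hx)
    ⟨y, le_trans hx hy, hxy⟩
  have hcutBA : ∀ x ∈ cut B α, ∃ y ∈ cut A α, dist x y ≤ r := fun x hx =>
    let ⟨y, hy, hxy⟩ := hBA x (hα.trans_le hx)
    ⟨y, le_trans hx hy, hxy⟩
  have hne : (cut A α).Nonempty ↔ (cut B α).Nonempty :=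
    ⟨fun ⟨x, hx⟩ => let ⟨y, hy, _⟩ := hcutAB x hx; ⟨y, hy⟩,
      fun ⟨x, hx⟩ => let ⟨y, hy, _⟩ := hcutBA x hx; ⟨y, hy⟩⟩
  rw [eHd, if_pos]
  · exact hausdorffDist_le_of_mem_dist hr hcutAB hcutBA
  · simp only [← not_nonempty_iff_eq_empty, hne]
    tauto

/-- The points `u i` with weights `c i` form a `δ`-net of the fuzzy set `A`: for every `α`, the
points of weight at least `α` lie in the `α`-cut of `A` and are `δ`-dense in it. Both conditions are
stated without reference to `α`. -/
structure IsCutNet [PseudoMetricSpace X] {ι : Type*} (δ : ℝ) (u : ι → X) (c : ι → ℝ)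
    (A : X → ℝ) : Prop where
  le_apply : ∀ i, c i ≤ A (u i)
  exists_le_dist_lt : ∀ x, ∃ i, A x ≤ c i ∧ dist x (u i) < δ

namespace IsCutNet

variable {ι : Type*} {u : ι → X} {c : ι → ℝ} {A : X → ℝ} {δ : ℝ}

theorem isGreatest_range [PseudoMetricSpace X] (h : IsCutNet δ u c A) {lam : ℝ}
    (hA : A ∈ Feq X lam) : IsGreatest (range c) lam := by
  obtain ⟨-, ⟨x, rfl⟩, hAle⟩ := hA
  have hle : ∀ i, c i ≤ A x := fun i => (h.le_apply i).trans (hAle _)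
  obtain ⟨i, hi, -⟩ := h.exists_le_dist_lt x
  exact ⟨⟨i, (hle i).antisymm hi⟩, forall_mem_range.2 hle⟩

theorem dinf_zadehMap_le [MetricSpace X] [Fintype ι] (h : IsCutNet δ u c A) (hδ : 0 ≤ δ)
    (f : ι → X) : dinf (zadehMap f c) A ≤ dist f u + δ := by
  refine dinf_le (add_nonneg dist_nonneg hδ) (fun x hx => ?_) fun x _ => ?_
  · obtain ⟨i, rfl, hi⟩ := exists_eq_zadehMap_of_pos hx
    exact ⟨u i, hi ▸ h.le_apply i,
      (dist_le_pi_dist f u i).trans (le_add_of_nonneg_right hδ)⟩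
  · obtain ⟨i, hAi, hxi⟩ := h.exists_le_dist_lt x
    refine ⟨f i, hAi.trans (le_zadehMap (finite_range c).bddAbove f i), ?_⟩
    linarith [dist_triangle_right x (f i) (u i), dist_le_pi_dist f u i]

end IsCutNet

theorem exists_finset_forall_exists_le_dist_lt [PseudoMetricSpace X] [CompactSpace X] {γ : Type*}
    [LinearOrder γ] {A : X → γ} (hA : UpperSemicontinuous A) {δ : ℝ} (hδ : 0 < δ) :
    ∃ s : Finset X, ∀ x, ∃ a ∈ s, A x ≤ A a ∧ dist x a < δ := by
  obtain ⟨t, -, htfin, hcover⟩ :=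
    finite_cover_balls_of_compact (isCompact_univ (X := X)) (by positivity : 0 < δ / 3)
  have hmax : ∀ y : X, ∃ a ∈ closedBall y (δ / 3), IsMaxOn A (closedBall y (δ / 3)) a := fun y =>
    (hA.upperSemicontinuousOn _).exists_isMaxOn ⟨y, mem_closedBall_self (by positivity)⟩
      isClosed_closedBall.isCompact
  choose a ha hamax using hmax
  refine ⟨htfin.toFinset.image a, fun x => ?_⟩
  obtain ⟨y, hyt, hxy⟩ := mem_iUnion₂.1 (hcover (mem_univ x))
  refine ⟨a y, Finset.mem_image_of_mem a (htfin.mem_toFinset.2 hyt),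
    hamax y (ball_subset_closedBall hxy), ?_⟩
  linarith [dist_triangle_right x (a y) y, mem_ball.1 hxy, mem_closedBall.1 (ha y)]

theorem exists_common_isCutNet [PseudoMetricSpace X] [CompactSpace X] {lam : ℝ} {A B : X → ℝ}
    (hA : A ∈ Feq X lam) (hB : B ∈ Feq X lam) {δ : ℝ} (hδ : 0 < δ) :
    ∃ (s t : Finset X) (c : s × t → ℝ), (∀ i, 0 ≤ c i) ∧
      IsCutNet δ (fun i : s × t => (i.1 : X)) c A ∧
      IsCutNet δ (fun i : s × t => (i.2 : X)) c B := by
  obtain ⟨⟨hA01, hAusc⟩, ⟨x, hx⟩, hAle⟩ := hA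
  obtain ⟨⟨hB01, hBusc⟩, ⟨y, hy⟩, hBle⟩ := hB
  obtain ⟨s, hs⟩ := exists_finset_forall_exists_le_dist_lt hAusc hδ
  obtain ⟨t, ht⟩ := exists_finset_forall_exists_le_dist_lt hBusc hδ
  obtain ⟨a₀, ha₀, hxa₀, -⟩ := hs x
  obtain ⟨b₀, hb₀, hyb₀, -⟩ := ht y
  refine ⟨s, t, fun i => min (A i.1) (B i.2), fun i => le_min (hA01 _).1 (hB01 _).1,
    ⟨fun _ => min_le_left _ _, fun z => ?_⟩, ⟨fun _ => min_le_right _ _, fun z => ?_⟩⟩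
  · obtain ⟨a, ha, hza, hdist⟩ := hs z
    have hzb₀ : A z ≤ B b₀ := (hAle z).trans (hy ▸ hyb₀)
    exact ⟨(⟨a, ha⟩, ⟨b₀, hb₀⟩), le_min hza hzb₀, hdist⟩
  · obtain ⟨b, hb, hzb, hdist⟩ := ht z
    have hza₀ : B z ≤ A a₀ := (hBle z).trans (hx ▸ hxa₀)
    exact ⟨(⟨a₀, ha₀⟩, ⟨b, hb⟩), le_min hza₀ hzb, hdist⟩

theorem MildMixTop.mildMixOn_zadeh [MetricSpace X] [CompactSpace X] {T : X → X}
    (hT : MildMixTop T) (hTc : Continuous T) (hTs : Surjective T) (lam : ℝ) :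
    MildMixOn dinf (zadeh T) (Feq X lam) := by
  intro Z _ _ _ R hR hRs hRt A hA B hB z₁ z₂ ε hε
  obtain ⟨x, hx⟩ := hA.2.1
  have : Nonempty X := ⟨x⟩
  have hlam : lam ≤ 1 := hx ▸ (hA.1.1 x).2
  obtain ⟨s, t, c, hc₀, hcA, hcB⟩ := exists_common_isCutNet hA hB (half_pos hε)
  have hc : IsGreatest (range c) lam := hcA.isGreatest_range hA
  obtain ⟨n, p, -, w, hp, hw, hTp, hRw⟩ := (hT.piMap hTc hTs (s × t)).mildMixOn_univ Z R hR hRs hRt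
    (fun i => i.1) (mem_univ _) (fun i => i.2) (mem_univ _) z₁ z₂ (ε / 2) (half_pos hε)
  rw [Pi.map_iterate] at hTp
  have hdistA := hcA.dinf_zadehMap_le (half_pos hε).le p
  have hdistB := hcB.dinf_zadehMap_le (half_pos hε).le (Pi.map (fun _ => T^[n]) p)
  have hiter : (zadeh T)^[n] (zadehMap p c) = zadehMap (Pi.map (fun _ => T^[n]) p) c :=
    zadeh_iterate_zadehMap ⟨lam, hc.2⟩ hc₀ T p n
  refine ⟨n, zadehMap p c, zadehMap_mem_Feq hlam hc₀ hc p, w, ?_, ?_, ?_, ?_⟩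
  · linarith
  · linarith
  · rw [hiter]
    linarith
  · linarith

/-- If `(K(X), T_K)` is mildly mixing, then the Zadeh extension restricted to each
`𝔽^{=λ}(X)` is mildly mixing. -/
theorem zadeh_mildMixing_of_hyper_mildMixing {X : Type*} [MetricSpace X] [CompactSpace X] [Nontrivial X]
    (T : X → X) (hT : Continuous T) (hTs : Function.Surjective T)
    (hmm : MildMixTop (hyper T hT)) :
    ∀ lam ∈ Set.Ioc (0:ℝ) 1, MildMixOn dinf (zadeh T) (Feq X lam) := by
  intro lam _
  have hmix : MildMixTop T := .of_hyper hmm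
  exact hmix.mildMixOn_zadeh hT hTs lam
end
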